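/- arXiv:1707.00818 — 2 statements merged into one kernel-verified Lean document; each statement's English description precedes it below -/
import Mathlib

section
/- Let τ and τ' be points of the upper half-plane ℍ ⊂ ℂ. Let w₁ : ℂ → ℂ be the unique ℝ-linear map with w₁(1) = 1 and w₁(τ) = τ', and let w₂ : ℂ → ℂ be the unique ℝ-linear map with w₂(1) = 1 and w₂(τ') = τ. Then max(log ‖w₁‖, log ‖w₂‖) ≤ dist(τ, τ') ≤ 2 · max(log ‖w₁‖, log ‖w₂‖), where ‖·‖ denotes the operator norm with respect to the complex absolute value and dist is the hyperbolic (Poincaré) distance on ℍ. (This is Sorvali's inequality comparing his dilatation metric d = max(log ‖w₁‖, log ‖w₂‖) with the Teichmüller metric on the Teichmüller space of the torus.) -/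
/-! The proof rests on the identity `dist τ τ' = log ‖w₁‖ + log ‖w₂‖`. Write
`w₁ z = z * a + conj z * b`; its norm is `‖a‖ + ‖b‖`, attained at a unit vector that rotates the two
summands into the same direction. Evaluating at `1` and `τ` gives
`2 * τ.im * ‖w₁‖ = ‖τ' - τ‖ + ‖τ' - conj τ‖`, that is,
`‖w₁‖ = √(τ'.im / τ.im) * exp (dist τ τ' / 2)`, and the square roots cancel in `‖w₁‖ * ‖w₂‖`. Both
logarithms are nonnegative because `w₁` and `w₂` fix `1`, so their sum lies between their maximum
and twice their maximum. -/

open ComplexConjugate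

theorem exists_norm_eq_one_and_norm_mul_add_conj_mul (a b : ℂ) :
    ∃ u : ℂ, ‖u‖ = 1 ∧ ‖u * a + conj u * b‖ = ‖a‖ + ‖b‖ := by
  let φ : ℝ := (b.arg - a.arg) / 2
  let v : ℂ := Complex.exp (((a.arg + b.arg) / 2 : ℝ) * Complex.I)
  refine ⟨Complex.exp (φ * Complex.I), Complex.norm_exp_ofReal_mul_I φ, ?_⟩
  have rotate_a : Complex.exp (φ * Complex.I) * a = ‖a‖ * v := by
    nth_rw 1 [← Complex.norm_mul_exp_arg_mul_I a]
    rw [mul_left_comm, ← Complex.exp_add]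
    congr 2
    push_cast [φ]
    ring
  have rotate_b : conj (Complex.exp (φ * Complex.I)) * b = ‖b‖ * v := by
    nth_rw 1 [← Complex.norm_mul_exp_arg_mul_I b]
    rw [← Complex.exp_conj, map_mul, Complex.conj_ofReal, Complex.conj_I, mul_left_comm,
      ← Complex.exp_add]
    congr 2
    push_cast [φ]
    ring
  rw [rotate_a, rotate_b, ← add_mul, norm_mul, Complex.norm_exp_ofReal_mul_I, mul_one,
    ← Complex.ofReal_add, Complex.norm_of_nonneg (by positivity)]

theorem opNorm_eq_norm_add_norm_of_apply_eq {w : ℂ →L[ℝ] ℂ} {a b : ℂ}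
    (hw : ∀ z, w z = z * a + conj z * b) : ‖w‖ = ‖a‖ + ‖b‖ := by
  apply le_antisymm
  · refine w.opNorm_le_bound (by positivity) fun z ↦ ?_
    calc ‖w z‖ ≤ ‖z * a‖ + ‖conj z * b‖ := hw z ▸ norm_add_le _ _
      _ = (‖a‖ + ‖b‖) * ‖z‖ := by rw [norm_mul, norm_mul, RCLike.norm_conj]; ring
  · obtain ⟨u, norm_u, norm_wu⟩ := exists_norm_eq_one_and_norm_mul_add_conj_mul a b
    rw [← norm_wu, ← hw]
    exact w.unit_le_opNorm u norm_u.le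

theorem exists_apply_eq_smul_add_conj_smul {E : Type*} [AddCommGroup E] [Module ℂ E]
    (w : ℂ →ₗ[ℝ] E) : ∃ a b : E, ∀ z, w z = z • a + conj z • b := by
  refine ⟨(2⁻¹ : ℂ) • (w 1 - Complex.I • w Complex.I),
    (2⁻¹ : ℂ) • (w 1 + Complex.I • w Complex.I), fun z ↦ ?_⟩
  have apply_eq : w z = (z.re : ℂ) • w 1 + (z.im : ℂ) • w Complex.I := by
    have hz : z = z.re • 1 + z.im • Complex.I := by simp
    conv_lhs => rw [hz, map_add, map_smul, map_smul]
    rw [Complex.coe_smul, Complex.coe_smul]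
  have im_eq : (z.im : ℂ) = -(Complex.I * (z - conj z) / 2) := by
    rw [Complex.sub_conj]
    push_cast
    linear_combination (z.im : ℂ) * Complex.I_sq
  rw [apply_eq, Complex.re_eq_add_conj, im_eq]
  module

theorem two_mul_abs_im_mul_opNorm (w : ℂ →L[ℝ] ℂ) (z : ℂ) :
    2 * |z.im| * ‖w‖ = ‖w z - w 1 * z‖ + ‖w z - w 1 * conj z‖ := by
  obtain ⟨a, b, hw⟩ := exists_apply_eq_smul_add_conj_smul (w : ℂ →ₗ[ℝ] ℂ)
  replace hw (ζ : ℂ) : w ζ = ζ * a + conj ζ * b := hw ζ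
  have antilinear_part : w z - w 1 * z = (conj z - z) * b := by
    rw [hw z, hw 1, map_one]
    ring
  have linear_part : w z - w 1 * conj z = (z - conj z) * a := by
    rw [hw z, hw 1, map_one]
    ring
  rw [antilinear_part, linear_part, norm_mul, norm_mul, ← dist_eq_norm, ← dist_eq_norm,
    Complex.dist_conj_self, Complex.dist_self_conj, opNorm_eq_norm_add_norm_of_apply_eq hw]
  ring

theorem one_le_opNorm_of_apply_eq_self {𝕜 E : Type*} [NontriviallyNormedField 𝕜]
    [NormedAddCommGroup E] [NormedSpace 𝕜 E] {f : E →L[𝕜] E} {x : E} (hx : x ≠ 0)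
    (hfx : f x = x) : 1 ≤ ‖f‖ := by
  simpa [hfx, hx] using f.ratio_le_opNorm x

theorem im_mul_opNorm_eq_sqrt_mul_exp_half_dist {τ τ' : UpperHalfPlane} {w : ℂ →L[ℝ] ℂ}
    (h_one : w 1 = 1) (hτ : w τ = τ') :
    τ.im * ‖w‖ = √(τ.im * τ'.im) * Real.exp (dist τ τ' / 2) := by
  have key := two_mul_abs_im_mul_opNorm w τ
  rw [hτ, h_one, one_mul, one_mul, ← dist_eq_norm, ← dist_eq_norm, UpperHalfPlane.coe_im,
    abs_of_pos τ.im_pos] at key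
  rw [dist_comm, UpperHalfPlane.exp_half_dist, ← key, mul_comm τ'.im]
  have := τ.im_pos
  have := τ'.im_pos
  field_simp

theorem log_opNorm_add_log_opNorm_eq_dist {τ τ' : UpperHalfPlane} {w₁ w₂ : ℂ →L[ℝ] ℂ}
    (h11 : w₁ 1 = 1) (h12 : w₁ τ = τ') (h21 : w₂ 1 = 1) (h22 : w₂ τ' = τ) :
    Real.log ‖w₁‖ + Real.log ‖w₂‖ = dist τ τ' := by
  have norm_w₁ := im_mul_opNorm_eq_sqrt_mul_exp_half_dist h11 h12
  have norm_w₂ := im_mul_opNorm_eq_sqrt_mul_exp_half_dist h21 h22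
  rw [dist_comm, mul_comm τ'.im τ.im] at norm_w₂
  have im_mul_pos : 0 < τ.im * τ'.im := mul_pos τ.im_pos τ'.im_pos
  have norm_mul_norm : ‖w₁‖ * ‖w₂‖ = Real.exp (dist τ τ') := by
    apply mul_left_cancel₀ im_mul_pos.ne'
    calc τ.im * τ'.im * (‖w₁‖ * ‖w₂‖) = (τ.im * ‖w₁‖) * (τ'.im * ‖w₂‖) := by ring
      _ = (√(τ.im * τ'.im) * √(τ.im * τ'.im)) *
          (Real.exp (dist τ τ' / 2) * Real.exp (dist τ τ' / 2)) := by
        rw [norm_w₁, norm_w₂, mul_mul_mul_comm]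
      _ = τ.im * τ'.im * Real.exp (dist τ τ') := by
        rw [Real.mul_self_sqrt im_mul_pos.le, ← Real.exp_add, add_halves]
  have norm_w₁_ne : ‖w₁‖ ≠ 0 :=
    (zero_lt_one.trans_le (one_le_opNorm_of_apply_eq_self one_ne_zero h11)).ne'
  have norm_w₂_ne : ‖w₂‖ ≠ 0 :=
    (zero_lt_one.trans_le (one_le_opNorm_of_apply_eq_self one_ne_zero h21)).ne'
  rw [← Real.log_mul norm_w₁_ne norm_w₂_ne, norm_mul_norm, Real.log_exp]

/-- Sorvali's sharp inequality comparing his dilatation metric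
`d = max(log ‖w₁‖, log ‖w₂‖)` with the Teichmüller (hyperbolic) metric:
`d ≤ dist τ τ' ≤ 2 d`. -/
theorem stmt_16 (τ τ' : UpperHalfPlane) (w₁ w₂ : ℂ →L[ℝ] ℂ)
    (h11 : w₁ 1 = 1) (h12 : w₁ (τ : ℂ) = (τ' : ℂ))
    (h21 : w₂ 1 = 1) (h22 : w₂ (τ' : ℂ) = (τ : ℂ)) :
    max (Real.log ‖w₁‖) (Real.log ‖w₂‖) ≤ dist τ τ' ∧
      dist τ τ' ≤ 2 * max (Real.log ‖w₁‖) (Real.log ‖w₂‖) := by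
  have log_w₁_nonneg : 0 ≤ Real.log ‖w₁‖ :=
    Real.log_nonneg (one_le_opNorm_of_apply_eq_self one_ne_zero h11)
  have log_w₂_nonneg : 0 ≤ Real.log ‖w₂‖ :=
    Real.log_nonneg (one_le_opNorm_of_apply_eq_self one_ne_zero h21)
  rw [← log_opNorm_add_log_opNorm_eq_dist h11 h12 h21 h22, two_mul]
  exact ⟨max_le_add_of_nonneg log_w₁_nonneg log_w₂_nonneg,
    add_le_add (le_max_left _ _) (le_max_right _ _)⟩
end

section
/- Let τ and τ' be points of the upper half-plane ℍ ⊂ ℂ, and let w : ℂ → ℂ be the unique ℝ-linear map with w(1/√(Im τ)) = 1/√(Im τ') and w(τ/√(Im τ)) = τ'/√(Im τ'). Then ‖w‖ = 1 if and only if τ = τ', where ‖w‖ is the operator norm with respect to the complex absolute value. (Hence Thurston's Lipschitz metric λ(τ, τ') = log ‖w‖ is nonnegative and separates points on the Teichmüller space of unit-area flat tori.) -/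
/-!
The frames `(1, τ) / √(Im τ)` and `(1, τ') / √(Im τ')` both span a parallelogram of area one, so `w`
has determinant one. If moreover `‖w‖ = 1`, then `w` is an isometry: were `‖w x‖ < r < ‖x‖`, the
`w`-preimage of the `r`-ball would contain, besides that ball, a neighbourhood of `x` of positive
area, although it has the same area as the ball. The two frames then have the same inner products
`1 / Im τ` and `Re τ / Im τ`, and these determine `τ`.
-/

open MeasureTheory Metric

open scoped InnerProductSpace

theorem norm_map_eq_of_norm_map_le_of_one_le_abs_det {E : Type*} [NormedAddCommGroup E]
    [NormedSpace ℝ E] [FiniteDimensional ℝ E] {f : E →ₗ[ℝ] E} (hle : ∀ x, ‖f x‖ ≤ ‖x‖)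
    (hdet : 1 ≤ |LinearMap.det f|) (x : E) : ‖f x‖ = ‖x‖ := by
  borelize E
  let μ : Measure E := Measure.addHaar
  refine (hle x).antisymm (not_lt.mp fun hlt ↦ ?_)
  obtain ⟨r, hfr, hrx⟩ := exists_between hlt
  have hf : Continuous f := f.continuous_of_finiteDimensional
  have ball_subset : ball 0 r ⊆ f ⁻¹' ball 0 r := fun y hy ↦
    mem_ball_zero_iff.mpr ((hle y).trans_lt (mem_ball_zero_iff.mp hy))
  have volume_preimage_le : μ (f ⁻¹' ball 0 r) ≤ μ (ball 0 r) := by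
    have det_ne_zero : LinearMap.det f ≠ 0 := abs_pos.mp (one_pos.trans_le hdet)
    rw [Measure.addHaar_preimage_linearMap μ det_ne_zero, abs_inv]
    exact mul_le_of_le_one_left' (ENNReal.ofReal_le_one.mpr (inv_le_one_of_one_le₀ hdet))
  have volume_diff : μ (f ⁻¹' ball 0 r \ ball 0 r) = 0 := by
    rw [measure_sdiff ball_subset measurableSet_ball.nullMeasurableSet measure_ball_lt_top.ne,
      tsub_eq_zero_of_le volume_preimage_le]
  have isOpen_diff : IsOpen (f ⁻¹' ball 0 r \ closedBall 0 r) :=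
    (isOpen_ball.preimage hf).sdiff isClosed_closedBall
  have x_mem : x ∈ f ⁻¹' ball 0 r \ closedBall 0 r := by simpa using ⟨hfr, hrx⟩
  exact (isOpen_diff.measure_pos μ ⟨x, x_mem⟩).ne'
    (measure_mono_null (Set.sdiff_subset_sdiff_right ball_subset_closedBall) volume_diff)

/-- The basis `(1, τ) / √(Im τ)` of the lattice `(ℤ + ℤτ) / √(Im τ)`, which presents the marked flat
torus with modulus `τ` as a quotient of `ℂ` of area one. -/
noncomputable def unitAreaFrame (τ : UpperHalfPlane) : Fin 2 → ℂ :=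
  ![1 / (Real.sqrt τ.im : ℂ), (τ : ℂ) / (Real.sqrt τ.im : ℂ)]

namespace unitAreaFrame

theorem basisOneI_det (τ : UpperHalfPlane) : Complex.basisOneI.det (unitAreaFrame τ) = 1 := by
  have sqrt_im_ne_zero : Real.sqrt τ.im ≠ 0 := (Real.sqrt_pos.mpr τ.im_pos).ne'
  simp [unitAreaFrame, Module.Basis.det_apply, Matrix.det_fin_two, Module.Basis.toMatrix_apply,
    inv_mul_cancel₀ sqrt_im_ne_zero]

theorem span_range (τ : UpperHalfPlane) :
    Submodule.span ℝ (Set.range (unitAreaFrame τ)) = ⊤ :=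
  ((Module.Basis.is_basis_iff_det Complex.basisOneI).mpr (by simp [basisOneI_det])).2

theorem inner_zero_zero (τ : UpperHalfPlane) :
    ⟪unitAreaFrame τ 0, unitAreaFrame τ 0⟫_ℝ = 1 / τ.im := by
  simp [unitAreaFrame, Real.sq_sqrt τ.im_pos.le]

theorem inner_zero_one (τ : UpperHalfPlane) :
    ⟪unitAreaFrame τ 0, unitAreaFrame τ 1⟫_ℝ = τ.re / τ.im := by
  have div_sqrt_mul : τ.re / Real.sqrt τ.im * (Real.sqrt τ.im)⁻¹ = τ.re / τ.im := by
    rw [← div_eq_mul_inv, div_div, Real.mul_self_sqrt τ.im_pos.le]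
  simpa [unitAreaFrame] using div_sqrt_mul

theorem gram_injective :
    Function.Injective fun τ : UpperHalfPlane ↦ Matrix.gram ℝ (unitAreaFrame τ) := by
  intro τ τ' h
  have him : τ.im = τ'.im := by
    simpa only [Matrix.gram_apply, inner_zero_zero, one_div, inv_inj] using congr_fun₂ h 0 0
  have hre : τ.re = τ'.re := by
    simpa only [Matrix.gram_apply, inner_zero_one, him, div_left_inj' τ'.im_ne_zero] using
      congr_fun₂ h 0 1
  exact UpperHalfPlane.ext_re_im hre him

theorem det_eq_one_of_comp_eq {τ τ' : UpperHalfPlane} {f : ℂ →ₗ[ℝ] ℂ}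
    (hf : f ∘ unitAreaFrame τ = unitAreaFrame τ') : LinearMap.det f = 1 := by
  simpa [hf, basisOneI_det] using (Complex.basisOneI.det_comp f (unitAreaFrame τ)).symm

end unitAreaFrame

/-- The normalized affine map from `τ` to `τ'` has operator norm 1 exactly when `τ = τ'`;
hence Thurston's Lipschitz metric `λ(τ,τ') = log ‖w‖` separates points. -/
theorem stmt_18 (τ τ' : UpperHalfPlane) (w : ℂ →L[ℝ] ℂ)
    (h1 : w (1 / (Real.sqrt τ.im : ℂ)) = 1 / (Real.sqrt τ'.im : ℂ))
    (h2 : w ((τ : ℂ) / (Real.sqrt τ.im : ℂ)) = (τ' : ℂ) / (Real.sqrt τ'.im : ℂ)) :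
    ‖w‖ = 1 ↔ τ = τ' := by
  have map_frame (i : Fin 2) : w (unitAreaFrame τ i) = unitAreaFrame τ' i := by
    fin_cases i <;> assumption
  constructor
  · intro hnorm
    have det_eq_one : LinearMap.det (w : ℂ →ₗ[ℝ] ℂ) = 1 :=
      unitAreaFrame.det_eq_one_of_comp_eq (funext map_frame)
    have norm_map (z : ℂ) : ‖w z‖ = ‖z‖ :=
      norm_map_eq_of_norm_map_le_of_one_le_abs_det (f := (w : ℂ →ₗ[ℝ] ℂ))
        (fun z ↦ by simpa [hnorm] using w.le_opNorm z) (by simp [det_eq_one]) z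
    have inner_map := (LinearMap.norm_map_iff_inner_map_map w).mp norm_map
    refine unitAreaFrame.gram_injective (Matrix.ext fun i j ↦ ?_)
    simp only [Matrix.gram_apply, ← map_frame, inner_map]
  · rintro rfl
    have w_eq_id : w = ContinuousLinearMap.id ℝ ℂ :=
      ContinuousLinearMap.coe_injective
        (LinearMap.ext_on_range (unitAreaFrame.span_range τ) map_frame)
    rw [w_eq_id, ContinuousLinearMap.norm_id]
end
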